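/- arXiv:1001.4729 — 2 statements merged into one kernel-verified Lean document; each statement's English description precedes it below -/
import Mathlib

section
/- Assume f satisfies (f1) and (f2). Let u be a C² solution of (E) on (0,∞) and let φ be a C¹ function on (0,∞), not identically zero, satisfying the linearized equation φ''(r) + ((n−1)/r)φ'(r) + f'(u(r))φ(r) = 0 at every r with u(r) ≠ 0. If r₁ < r₂ are two consecutive zeros of u' (i.e., u'(r₁) = u'(r₂) = 0 and u'(r) ≠ 0 for r ∈ (r₁,r₂)), then φ has at least one zero in (r₁,r₂). -/
open Set Filter MeasureTheory

namespace Paper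

noncomputable section

/-- `F s = ∫₀ˢ f t dt`. -/
def Fint (f : ℝ → ℝ) (s : ℝ) : ℝ := ∫ t in (0:ℝ)..s, f t

/-- Hypothesis (f1): `f` is odd, `f 0 = 0`, there are `β > b > 0` with `f > 0` on `(b,∞)`,
`f ≤ 0`, `f ≢ 0` on `[0,b]`, and `F β = 0`. -/
def Hf1 (f : ℝ → ℝ) (b β : ℝ) : Prop :=
  (∀ s, f (-s) = -f s) ∧ f 0 = 0 ∧ 0 < b ∧ b < β ∧
    (∀ s, b < s → 0 < f s) ∧ (∀ s ∈ Icc (0:ℝ) b, f s ≤ 0) ∧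
    (∃ s ∈ Icc (0:ℝ) b, f s ≠ 0) ∧ Fint f β = 0

/-- Hypothesis (f2): `f` continuous on `[0,∞)`, C¹ on `(0,∞)`, `f' ∈ L¹(0,1)`. -/
def Hf2 (f : ℝ → ℝ) : Prop :=
  ContinuousOn f (Ici 0) ∧ (∀ s : ℝ, 0 < s → DifferentiableAt ℝ f s) ∧
    ContinuousOn (deriv f) (Ioi 0) ∧ IntegrableOn (deriv f) (Ioo 0 1)

/-- Hypothesis (f3): `f s ≥ f' s * (s - β)` for `s ≥ β`. -/
def Hf3 (f : ℝ → ℝ) (β : ℝ) : Prop := ∀ s, β ≤ s → deriv f s * (s - β) ≤ f s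

/-- Hypothesis (f4): `(F/f)' s ≥ (n-2)/(2n)` for `s > β`. -/
def Hf4 (n : ℕ) (f : ℝ → ℝ) (β : ℝ) : Prop :=
  ∀ s, β < s → ((n : ℝ) - 2) / (2 * (n : ℝ)) ≤ deriv (fun t => Fint f t / f t) s

/-- Hypothesis (f4'): `(F/f)' s ≥ (n-2)/2` for `s > β`. -/
def Hf4' (n : ℕ) (f : ℝ → ℝ) (β : ℝ) : Prop :=
  ∀ s, β < s → ((n : ℝ) - 2) / 2 ≤ deriv (fun t => Fint f t / f t) s

/-- Hypothesis (f5): `s ↦ s f' s / f s` is nonincreasing on `[β,∞)`. -/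
def Hf5 (f : ℝ → ℝ) (β : ℝ) : Prop := AntitoneOn (fun s => s * deriv f s / f s) (Ici β)

/-- Hypothesis (f6): `β f' β / f β ≤ n/(n-2)`. -/
def Hf6 (n : ℕ) (f : ℝ → ℝ) (β : ℝ) : Prop := β * deriv f β / f β ≤ (n : ℝ) / ((n : ℝ) - 2)

/-- Hypothesis (f1'): `f 0 = 0` and `s f s > 0` for `s > 0`. -/
def Hf1' (f : ℝ → ℝ) : Prop := f 0 = 0 ∧ ∀ s : ℝ, 0 < s → 0 < s * f s

/-- Hypothesis (f3'): `f s ≥ s f' s` for `s > 0`, with strict inequality at points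
arbitrarily close to `0`. -/
def Hf3' (f : ℝ → ℝ) : Prop :=
  (∀ s : ℝ, 0 < s → s * deriv f s ≤ f s) ∧
    ∀ ε : ℝ, 0 < ε → ∃ s ∈ Ioo (0:ℝ) ε, s * deriv f s < f s

/-- `v` is a C² solution of (E) on `(0,∞)`, continuous on `[0,∞)`,
with `v 0 = α` and `v' 0 = 0`. -/
def IVPsol (n : ℕ) (f : ℝ → ℝ) (α : ℝ) (v : ℝ → ℝ) : Prop :=
  v 0 = α ∧ deriv v 0 = 0 ∧ ContinuousOn v (Ici 0) ∧
    (∀ r : ℝ, 0 < r → DifferentiableAt ℝ v r ∧ DifferentiableAt ℝ (deriv v) r) ∧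
    (∀ r : ℝ, 0 < r → deriv (deriv v) r + ((n : ℝ) - 1) / r * deriv v r + f (v r) = 0)

/-- The family `α ↦ u α` of solutions of the IVP, with `u α r` and `u' α r`
continuous in `(α, r)`. -/
def Family (n : ℕ) (f : ℝ → ℝ) (u : ℝ → ℝ → ℝ) : Prop :=
  (∀ α : ℝ, 0 < α → IVPsol n f α (u α)) ∧
    ContinuousOn (fun p : ℝ × ℝ => u p.1 p.2) (Ioi 0 ×ˢ Ici 0) ∧
    ContinuousOn (fun p : ℝ × ℝ => deriv (u p.1) p.2) (Ioi 0 ×ˢ Ici 0)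

/-- The set whose supremum is `Z_k α`, given `T = T_{k-1} α`. -/
def ZsetAux (u : ℝ → ℝ → ℝ) (k : ℕ) (T α : ℝ) : Set ℝ :=
  {r | T < r ∧ ∀ s ∈ Ioo T r, (-1 : ℝ) ^ k * u α s < 0 ∧ 0 < (-1 : ℝ) ^ k * deriv (u α) s}

/-- The pair `(Z_k, T_k)`, with `T₀ = 0`;
`Z_k α = sup {r > T_{k-1} α | (-1)^k u < 0, (-1)^k u' > 0 on (T_{k-1} α, r)}` and
`T_k α = inf {r > Z_k α | u'(r, α) = 0}`. -/
def ZT (u : ℝ → ℝ → ℝ) : ℕ → (ℝ → ℝ) × (ℝ → ℝ)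
  | 0 => (fun _ => 0, fun _ => 0)
  | k + 1 =>
    let Z : ℝ → ℝ := fun α => sSup (ZsetAux u (k + 1) ((ZT u k).2 α) α)
    (Z, fun α => sInf {r | Z α < r ∧ deriv (u α) r = 0})

/-- `Z_k α` (as a real number; the genuine value when the defining set is bounded above). -/
def Zk (u : ℝ → ℝ → ℝ) (k : ℕ) (α : ℝ) : ℝ := (ZT u k).1 α

/-- `T_k α`, with `T₀ = 0`. -/
def Tk (u : ℝ → ℝ → ℝ) (k : ℕ) (α : ℝ) : ℝ := (ZT u k).2 α

/-- The defining set of `Z_k α`; `Z_k α = ∞` iff this set is unbounded above. -/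
def ZsetK (u : ℝ → ℝ → ℝ) (k : ℕ) (α : ℝ) : Set ℝ := ZsetAux u k (Tk u (k - 1) α) α

open Classical in
/-- The value of `u (·, α)` at `Z_k α`, as a limit `r → ∞` when `Z_k α = ∞`. -/
def uAtZ (u : ℝ → ℝ → ℝ) (k : ℕ) (α : ℝ) : ℝ :=
  if BddAbove (ZsetK u k α) then u α (Zk u k α) else limUnder atTop (u α)

open Classical in
/-- The value of `u' (·, α)` at `Z_k α`, as a limit `r → ∞` when `Z_k α = ∞`. -/
def duAtZ (u : ℝ → ℝ → ℝ) (k : ℕ) (α : ℝ) : ℝ :=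
  if BddAbove (ZsetK u k α) then deriv (u α) (Zk u k α) else limUnder atTop (deriv (u α))

open Classical in
/-- `Z_k α` as an extended real number. -/
def ZkE (u : ℝ → ℝ → ℝ) (k : ℕ) (α : ℝ) : WithTop ℝ :=
  if BddAbove (ZsetK u k α) then (Zk u k α : WithTop ℝ) else ⊤

/-- Membership in `F̃_k` (for `α ∈ N_{k-1}`): `(-1)^k u' (r, α) < 0` for all `r > Z_{k-1} α`. -/
def Ftil (u : ℝ → ℝ → ℝ) (k : ℕ) (α : ℝ) : Prop :=
  ∀ r, Zk u (k - 1) α < r → (-1 : ℝ) ^ k * deriv (u α) r < 0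

/-- The sets `N_k` (with `N₀ := (0,∞)`). -/
def Nk (u : ℝ → ℝ → ℝ) : ℕ → Set ℝ
  | 0 => Ioi 0
  | 1 => {α | 0 < α ∧ uAtZ u 1 α = 0 ∧ duAtZ u 1 α < 0}
  | k + 2 => {α | α ∈ Nk u (k + 1) ∧ ¬Ftil u (k + 2) α ∧ uAtZ u (k + 2) α = 0 ∧
      0 < (-1 : ℝ) ^ (k + 2) * duAtZ u (k + 2) α}

/-- The sets `G_k`. -/
def Gk (u : ℝ → ℝ → ℝ) : ℕ → Set ℝ
  | 0 => ∅
  | 1 => {α | 0 < α ∧ uAtZ u 1 α = 0 ∧ duAtZ u 1 α = 0}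
  | k + 2 => {α | α ∈ Nk u (k + 1) ∧ ¬Ftil u (k + 2) α ∧ uAtZ u (k + 2) α = 0 ∧
      duAtZ u (k + 2) α = 0}

/-- The set `F̃_k` (for `k ≥ 2`). -/
def FtilSet (u : ℝ → ℝ → ℝ) (k : ℕ) : Set ℝ := {α | α ∈ Nk u (k - 1) ∧ Ftil u k α}

/-- The set `F_k` (for `k ≥ 2`). -/
def Fk (u : ℝ → ℝ → ℝ) (k : ℕ) : Set ℝ :=
  {α | α ∈ Nk u (k - 1) ∧ ¬Ftil u k α ∧ (-1 : ℝ) ^ k * uAtZ u k α < 0}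

/-- The sets `P_k`. -/
def Pk (u : ℝ → ℝ → ℝ) : ℕ → Set ℝ
  | 0 => ∅
  | 1 => {α | 0 < α ∧ 0 < uAtZ u 1 α}
  | k + 2 => FtilSet u (k + 2) ∪ Fk u (k + 2)

/-- The set of extremal points (zeros of `u' (·, α)`) in `[0, A]`. -/
def ExtSet (u : ℝ → ℝ → ℝ) (α A : ℝ) : Set ℝ := {r | r ∈ Icc 0 A ∧ deriv (u α) r = 0}

/-- The conclusion of the δ₁-lemma (Lemma 4.1): every solution with initial value in
`(α*-δ₁, α*+δ₁)` has exactly `k` extremal points in `[0, T_{k-1}(α*) + a]`, with minimum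
values `< -β` and maximum values `> β`; moreover any two such solutions intersect between
any two of their consecutive extremal points, and in `(T_{k-1}(α*), Z_k(α*))`. -/
def DeltaOneLemma (f : ℝ → ℝ) (β : ℝ) (u : ℝ → ℝ → ℝ) (k : ℕ) (αs a δ₁ : ℝ) : Prop :=
  0 < a ∧ 0 < δ₁ ∧
    (∀ α ∈ Ioo (αs - δ₁) (αs + δ₁),
      (ExtSet u α (Tk u (k - 1) αs + a)).Finite ∧
        (ExtSet u α (Tk u (k - 1) αs + a)).ncard = k ∧
        ∀ r ∈ ExtSet u α (Tk u (k - 1) αs + a),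
          (IsLocalMin (u α) r → u α r < -β) ∧ (IsLocalMax (u α) r → β < u α r)) ∧
    ∀ α₁ ∈ Ioo (αs - δ₁) (αs + δ₁), ∀ α₂ ∈ Ioo (αs - δ₁) (αs + δ₁), α₁ < α₂ →
      (∀ i : ℕ, 1 ≤ i → i ≤ k - 1 →
        ∃ t, max (Tk u (i - 1) α₁) (Tk u (i - 1) α₂) < t ∧
          t < min (Tk u i α₁) (Tk u i α₂) ∧ u α₁ t = u α₂ t) ∧
      ∃ t, Tk u (k - 1) αs < t ∧ (BddAbove (ZsetK u k αs) → t < Zk u k αs) ∧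
        u α₁ t = u α₂ t

/-- `ρ` is the inverse of the monotone branch of `v` on `[t₁, t₂]`, whose set of values
is `[m, M]`. -/
def InvBranch (v ρ : ℝ → ℝ) (t₁ t₂ m M : ℝ) : Prop :=
  (∀ s ∈ Icc m M, ρ s ∈ Icc t₁ t₂ ∧ v (ρ s) = s) ∧
    ∀ s ∈ Ioo m M, HasDerivAt ρ (1 / deriv v (ρ s)) s

/-- `ρ` inverts a decreasing branch of `v` over the value interval `[m, M]`, along which
`(v')² + 2F > 0`. -/
def DecBranchInv (f : ℝ → ℝ) (v ρ : ℝ → ℝ) (m M : ℝ) : Prop :=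
  ∀ s ∈ Icc m M, 0 ≤ ρ s ∧ v (ρ s) = s ∧ deriv v (ρ s) < 0 ∧
    HasDerivAt ρ (1 / deriv v (ρ s)) s ∧ 0 < (deriv v (ρ s)) ^ 2 + 2 * Fint f s

/-- The functional `Q(s) = -4 (F/f)(s) r/r' - r²/(r')² - 2 r² F(s) + H(s)` computed along
the branch inverse `ρ`. -/
def Qfun (f H ρ : ℝ → ℝ) (s : ℝ) : ℝ :=
  -4 * (Fint f s / f s) * (ρ s / deriv ρ s) - (ρ s) ^ 2 / (deriv ρ s) ^ 2 -
    2 * (ρ s) ^ 2 * Fint f s + H s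

/-- The functional `P(s) = -2n (F/f)(s) r^{n-1}/r' - r^n/(r')² - 2 r^n F(s)`. -/
def Pfun (n : ℕ) (f : ℝ → ℝ) (ρ : ℝ → ℝ) (s : ℝ) : ℝ :=
  -(2 * (n : ℝ)) * (Fint f s / f s) * (ρ s ^ (n - 1) / deriv ρ s) -
    ρ s ^ n / (deriv ρ s) ^ 2 - 2 * ρ s ^ n * Fint f s

/-- The functional `W(s) = r(s) √((u'(r(s)))² + 2 F(s))`. -/
def Wfun (f v ρ : ℝ → ℝ) (s : ℝ) : ℝ :=
  ρ s * Real.sqrt ((deriv v (ρ s)) ^ 2 + 2 * Fint f s)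

/-- The functional `W̃(s) = r(s)^{n-1} √((u'(r(s)))² + 2 F(s))`. -/
def Wtil (n : ℕ) (f : ℝ → ℝ) (v ρ : ℝ → ℝ) (s : ℝ) : ℝ :=
  ρ s ^ (n - 1) * Real.sqrt ((deriv v (ρ s)) ^ 2 + 2 * Fint f s)

/-- `v` changes sign at `z ∈ (0,∞)`: `v z = 0` and `v` takes both signs in every
neighborhood of `z` (within `(0,∞)`). -/
def SignChange (v : ℝ → ℝ) (z : ℝ) : Prop :=
  v z = 0 ∧ ∀ ε : ℝ, 0 < ε →
    (∃ x ∈ Ioo (z - ε) (z + ε) ∩ Ioi 0, 0 < v x) ∧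
    (∃ x ∈ Ioo (z - ε) (z + ε) ∩ Ioi 0, v x < 0)

/-- `v` has exactly `m` sign changes in `(0,∞)`. -/
def ExactSignChanges (v : ℝ → ℝ) (m : ℕ) : Prop :=
  {z | 0 < z ∧ SignChange v z}.Finite ∧ {z | 0 < z ∧ SignChange v z}.ncard = m

/-- Bound state: a C² solution of (E) on `(0,∞)` with `v' 0 = 0` and `v r → 0` as `r → ∞`. -/
def BoundState (n : ℕ) (f : ℝ → ℝ) (v : ℝ → ℝ) : Prop :=
  ContinuousOn v (Ici 0) ∧
    (∀ r : ℝ, 0 < r → DifferentiableAt ℝ v r ∧ DifferentiableAt ℝ (deriv v) r) ∧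
    (∀ r : ℝ, 0 < r → deriv (deriv v) r + ((n : ℝ) - 1) / r * deriv v r + f (v r) = 0) ∧
    deriv v 0 = 0 ∧ Tendsto v atTop (nhds 0)

/-- Solution of the Dirichlet problem on the ball of radius `R`. -/
def DirichletSol (n : ℕ) (f : ℝ → ℝ) (R : ℝ) (v : ℝ → ℝ) : Prop :=
  ContinuousOn v (Icc 0 R) ∧
    (∀ r ∈ Ioo (0:ℝ) R, DifferentiableAt ℝ v r ∧ DifferentiableAt ℝ (deriv v) r) ∧
    (∀ r ∈ Ioo (0:ℝ) R, deriv (deriv v) r + ((n : ℝ) - 1) / r * deriv v r + f (v r) = 0) ∧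
    deriv v 0 = 0 ∧ v R = 0

end
end Paper

open Paper Set Filter MeasureTheory

/-!
Differentiating (E) shows that `v = u'` satisfies `v'' + (a/r) v' + (f'(u) - a/r²) v = 0` with
`a = n - 1`, wherever `f` is differentiable at `u r`. In divergence form, with weight `p = r ^ a`,
`v` and `φ` solve two Sturm-Liouville equations whose potentials differ by `r ^ a * (a / r²) > 0`.
The Wronskian `W = v (p φ') - φ (p v')` therefore satisfies `W' = -r ^ a * (a / r²) * v φ`. The
right-hand side is continuous although `f'` may blow up at `0`, and `u` is injective between
consecutive extremal points, so only countably many radii are lost and `W` may still be integrated.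
If `φ` had no zero, `v φ` would have a constant sign, and the sign of `∫ W'` would contradict the
boundary values `W = -φ p v'`, whose signs are forced by `v` vanishing at both ends.
-/

theorem forall_lt_or_forall_gt_of_forall_ne {X α : Type*} [TopologicalSpace X] [LinearOrder α]
    [TopologicalSpace α] [OrderClosedTopology α] {s : Set X} {g : X → α} {c : α}
    (hs : IsPreconnected s) (hg : ContinuousOn g s) (hne : ∀ x ∈ s, g x ≠ c) :
    (∀ x ∈ s, c < g x) ∨ ∀ x ∈ s, g x < c := by
  by_contra! ⟨⟨x, hx, hxc⟩, y, hy, hcy⟩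
  obtain ⟨z, hz, hzc⟩ := hs.intermediate_value hx hy hg ⟨hxc, hcy⟩
  exact hne z hz hzc

-- The factor `y - x` carries the direction, so that one statement serves both ends of an interval.
theorem mul_sub_nonneg_of_isLocalMinOn {g : ℝ → ℝ} {g' x y : ℝ} {s : Set ℝ} (hs : Convex ℝ s)
    (hx : x ∈ s) (hy : y ∈ s) (hmin : IsLocalMinOn g s x) (hg : HasDerivWithinAt g g' s x) :
    0 ≤ g' * (y - x) := by
  simpa [mul_comm] using hmin.hasFDerivWithinAt_nonneg hg.hasFDerivWithinAt
    (sub_mem_posTangentConeAt_of_segment_subset (hs.segment_subset hx hy))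

theorem mul_deriv_mul_sub_nonneg_of_mul_nonneg {v φ : ℝ → ℝ} {x y : ℝ} {s : Set ℝ} (hs : Convex ℝ s)
    (hx : x ∈ s) (hy : y ∈ s) (hv : DifferentiableAt ℝ v x) (hφ : DifferentiableAt ℝ φ x)
    (hvx : v x = 0) (hvφ : ∀ t ∈ s, 0 ≤ v t * φ t) : 0 ≤ φ x * deriv v x * (y - x) := by
  have hmin : IsMinOn (fun t => v t * φ t) s x := fun t ht => by simpa [hvx] using hvφ t ht
  have hderiv := (hv.hasDerivAt.fun_mul hφ.hasDerivAt).hasDerivWithinAt (s := s)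
  simpa [hvx, mul_comm (deriv v x)] using
    mul_sub_nonneg_of_isLocalMinOn hs hx hy hmin.localize hderiv

/-- `v` solves the Sturm-Liouville equation `(p v')' + q v = 0` on `[a, b]`. The equation is
required only off the set `S`, where the potential `q` may be singular; across `S`, the flux
`p v'` is merely continuous. -/
structure SturmLiouvilleSolOn (p q : ℝ → ℝ) (a b : ℝ) (S : Set ℝ) (v : ℝ → ℝ) : Prop where
  differentiableAt : ∀ x ∈ Icc a b, DifferentiableAt ℝ v x
  continuousOn_flux : ContinuousOn (fun x => p x * deriv v x) (Icc a b)
  hasDerivAt_flux : ∀ x ∈ Ioo a b \ S, HasDerivAt (fun x => p x * deriv v x) (-(q x * v x)) x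

/-- The Wronskian `v (p φ') - φ (p v')` of `v` and `φ` with weight `p`, in which the Sturm
comparison argument is carried out. -/
noncomputable def weightedWronskian (p v φ : ℝ → ℝ) (x : ℝ) : ℝ :=
  v x * (p x * deriv φ x) - φ x * (p x * deriv v x)

namespace SturmLiouvilleSolOn

variable {p q q₁ q₂ v φ : ℝ → ℝ} {a b : ℝ} {S : Set ℝ}

theorem continuousOn (hv : SturmLiouvilleSolOn p q a b S v) : ContinuousOn v (Icc a b) :=
  fun x hx => (hv.differentiableAt x hx).continuousAt.continuousWithinAt

theorem neg (hv : SturmLiouvilleSolOn p q a b S v) : SturmLiouvilleSolOn p q a b S (-v) where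
  differentiableAt x hx := (hv.differentiableAt x hx).neg
  continuousOn_flux := by simpa [deriv.neg'] using hv.continuousOn_flux.fun_neg
  hasDerivAt_flux x hx := by simpa [deriv.neg'] using (hv.hasDerivAt_flux x hx).fun_neg

theorem hasDerivAt_weightedWronskian (hv : SturmLiouvilleSolOn p q₁ a b S v)
    (hφ : SturmLiouvilleSolOn p q₂ a b S φ) {x : ℝ} (hx : x ∈ Ioo a b \ S) :
    HasDerivAt (weightedWronskian p v φ) (-((q₂ x - q₁ x) * (v x * φ x))) x := by
  have hv' := (hv.differentiableAt x (Ioo_subset_Icc_self hx.1)).hasDerivAt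
  have hφ' := (hφ.differentiableAt x (Ioo_subset_Icc_self hx.1)).hasDerivAt
  exact ((hv'.fun_mul (hφ.hasDerivAt_flux x hx)).fun_sub
    (hφ'.fun_mul (hv.hasDerivAt_flux x hx))).congr_deriv (by ring)

theorem continuousOn_weightedWronskian (hv : SturmLiouvilleSolOn p q₁ a b S v)
    (hφ : SturmLiouvilleSolOn p q₂ a b S φ) :
    ContinuousOn (weightedWronskian p v φ) (Icc a b) :=
  (hv.continuousOn.mul hφ.continuousOn_flux).sub (hφ.continuousOn.mul hv.continuousOn_flux)

theorem intervalIntegrable_sub_mul (hab : a ≤ b) (hv : SturmLiouvilleSolOn p q₁ a b S v)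
    (hφ : SturmLiouvilleSolOn p q₂ a b S φ)
    (hq : ContinuousOn (fun x => q₂ x - q₁ x) (Icc a b)) :
    IntervalIntegrable (fun x => (q₂ x - q₁ x) * (v x * φ x)) volume a b :=
  (hq.mul (hv.continuousOn.mul hφ.continuousOn)).intervalIntegrable_of_Icc hab

theorem integral_sub_mul (hab : a ≤ b) (hS : (Ioo a b ∩ S).Countable)
    (hv : SturmLiouvilleSolOn p q₁ a b S v) (hφ : SturmLiouvilleSolOn p q₂ a b S φ)
    (hq : ContinuousOn (fun x => q₂ x - q₁ x) (Icc a b)) :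
    ∫ x in a..b, (q₂ x - q₁ x) * (v x * φ x) =
      weightedWronskian p v φ a - weightedWronskian p v φ b := by
  have hftc := integral_eq_of_hasDerivAt_off_countable_of_le _ _ hab hS
    (hv.continuousOn_weightedWronskian hφ)
    (fun x hx => hv.hasDerivAt_weightedWronskian hφ (sdiff_self_inter (s := Ioo a b) ▸ hx))
    (hv.intervalIntegrable_sub_mul hab hφ hq).neg
  rw [intervalIntegral.integral_neg] at hftc
  linarith

theorem not_forall_mul_pos (hab : a < b) (hS : (Ioo a b ∩ S).Countable)
    (hpa : 0 ≤ p a) (hpb : 0 ≤ p b)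
    (hv : SturmLiouvilleSolOn p q₁ a b S v) (hφ : SturmLiouvilleSolOn p q₂ a b S φ)
    (hq : ContinuousOn (fun x => q₂ x - q₁ x) (Icc a b)) (hlt : ∀ x ∈ Ioo a b, q₁ x < q₂ x)
    (hva : v a = 0) (hvb : v b = 0) : ¬ ∀ x ∈ Ioo a b, 0 < v x * φ x := by
  intro hpos
  have hnonneg : ∀ x ∈ Icc a b, 0 ≤ v x * φ x := fun x hx => by
    rcases eq_endpoints_or_mem_Ioo_of_mem_Icc hx with rfl | rfl | hx
    · simp [hva]
    · simp [hvb]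
    · exact (hpos x hx).le
  have ha := left_mem_Icc.2 hab.le
  have hb := right_mem_Icc.2 hab.le
  have hleft : 0 ≤ φ a * deriv v a :=
    nonneg_of_mul_nonneg_left (mul_deriv_mul_sub_nonneg_of_mul_nonneg (convex_Icc a b) ha hb
      (hv.differentiableAt a ha) (hφ.differentiableAt a ha) hva hnonneg) (sub_pos.2 hab)
  have hright : φ b * deriv v b ≤ 0 :=
    nonpos_of_mul_nonneg_left (mul_deriv_mul_sub_nonneg_of_mul_nonneg (convex_Icc a b) hb ha
      (hv.differentiableAt b hb) (hφ.differentiableAt b hb) hvb hnonneg) (sub_neg.2 hab)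
  have hint := intervalIntegral.intervalIntegral_pos_of_pos_on
    (hv.intervalIntegrable_sub_mul hab.le hφ hq)
    (fun x hx => mul_pos (sub_pos.2 (hlt x hx)) (hpos x hx)) hab
  rw [integral_sub_mul hab.le hS hv hφ hq] at hint
  simp only [weightedWronskian, hva, hvb] at hint
  linarith [mul_nonneg hpa hleft, mul_nonpos_of_nonneg_of_nonpos hpb hright]

theorem exists_eq_zero_of_potential_lt (hab : a < b) (hS : (Ioo a b ∩ S).Countable)
    (hpa : 0 ≤ p a) (hpb : 0 ≤ p b)
    (hv : SturmLiouvilleSolOn p q₁ a b S v) (hφ : SturmLiouvilleSolOn p q₂ a b S φ)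
    (hq : ContinuousOn (fun x => q₂ x - q₁ x) (Icc a b)) (hlt : ∀ x ∈ Ioo a b, q₁ x < q₂ x)
    (hva : v a = 0) (hvb : v b = 0) (hv₀ : ∀ x ∈ Ioo a b, v x ≠ 0) :
    ∃ x ∈ Ioo a b, φ x = 0 := by
  by_contra! hφ₀
  have hcont : ContinuousOn (fun x => v x * φ x) (Ioo a b) :=
    (hv.continuousOn.mul hφ.continuousOn).mono Ioo_subset_Icc_self
  rcases forall_lt_or_forall_gt_of_forall_ne isPreconnected_Ioo hcont
    fun x hx => mul_ne_zero (hv₀ x hx) (hφ₀ x hx) with hpos | hneg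
  · exact not_forall_mul_pos hab hS hpa hpb hv hφ hq hlt hva hvb hpos
  · exact not_forall_mul_pos hab hS hpa hpb hv hφ.neg hq hlt hva hvb
      fun x hx => by simpa using hneg x hx

end SturmLiouvilleSolOn

section Radial

variable {a r r₁ r₂ : ℝ} {f u : ℝ → ℝ}

theorem hasDerivAt_rpow_mul_of_radial {w : ℝ → ℝ} {c : ℝ} (hr : 0 < r)
    (hw : HasDerivAt w (-(a / r * w r + c)) r) :
    HasDerivAt (fun x => x ^ a * w x) (-(r ^ a * c)) r := by
  refine ((Real.hasDerivAt_rpow_const (Or.inl hr.ne')).fun_mul hw).congr_deriv ?_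
  rw [Real.rpow_sub_one hr.ne']
  ring

theorem SturmLiouvilleSolOn.of_radial {q φ : ℝ → ℝ} {S : Set ℝ} (hr₁ : 0 < r₁)
    (hφ : ∀ r ∈ Icc r₁ r₂, DifferentiableAt ℝ φ r) (hφ' : ContinuousOn (deriv φ) (Icc r₁ r₂))
    (heq : ∀ r ∈ Ioo r₁ r₂ \ S, HasDerivAt (deriv φ) (-(a / r * deriv φ r + q r * φ r)) r) :
    SturmLiouvilleSolOn (fun r => r ^ a) (fun r => r ^ a * q r) r₁ r₂ S φ where
  differentiableAt := hφ
  continuousOn_flux := (continuousOn_id.rpow_const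
    fun _ hr => Or.inl (hr₁.trans_le hr.1).ne').mul hφ'
  hasDerivAt_flux r hr := (hasDerivAt_rpow_mul_of_radial (hr₁.trans hr.1.1) (heq r hr)).congr_deriv
    (by ring)

theorem hasDerivAt_deriv_deriv_of_radial (hr : r ≠ 0) (hu : DifferentiableAt ℝ u r)
    (hu' : DifferentiableAt ℝ (deriv u) r) (hf : DifferentiableAt ℝ f (u r))
    (heq : ∀ᶠ x in nhds r, deriv (deriv u) x + a / x * deriv u x + f (u x) = 0) :
    HasDerivAt (deriv (deriv u))
      (-(a / r * deriv (deriv u) r + (deriv f (u r) - a / r ^ 2) * deriv u r)) r := by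
  have hdiv : HasDerivAt (fun x : ℝ => a / x) (-a / r ^ 2) r := by
    simpa using (hasDerivAt_const r a).fun_div (hasDerivAt_id r) hr
  have hrhs := ((hdiv.fun_mul hu'.hasDerivAt).fun_add
    (hf.hasDerivAt.comp r hu.hasDerivAt)).fun_neg
  refine (hrhs.congr_of_eventuallyEq ?_).congr_deriv (by ring)
  filter_upwards [heq] with x hx
  simp only [Function.comp_apply]
  linarith

theorem continuousOn_deriv_deriv_of_radial {s : Set ℝ} (hs : ∀ r ∈ s, r ≠ 0)
    (hf : Continuous f) (hu : ContinuousOn u s) (hu' : ContinuousOn (deriv u) s)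
    (heq : ∀ r ∈ s, deriv (deriv u) r + a / r * deriv u r + f (u r) = 0) :
    ContinuousOn (deriv (deriv u)) s :=
  (((continuousOn_const.div continuousOn_id hs).mul hu').add
    (hf.comp_continuousOn hu)).neg.congr fun r hr =>
      eq_neg_of_add_eq_zero_left ((add_assoc _ _ _).symm.trans (heq r hr))

theorem SturmLiouvilleSolOn.deriv_of_radial {S : Set ℝ} (hr₁ : 0 < r₁) (hf : Continuous f)
    (hf' : ∀ s ∉ S, DifferentiableAt ℝ f s)
    (hu : ∀ r ∈ Icc r₁ r₂, DifferentiableAt ℝ u r ∧ DifferentiableAt ℝ (deriv u) r)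
    (heq : ∀ r ∈ Icc r₁ r₂, deriv (deriv u) r + a / r * deriv u r + f (u r) = 0) :
    SturmLiouvilleSolOn (fun r => r ^ a) (fun r => r ^ a * (deriv f (u r) - a / r ^ 2))
      r₁ r₂ (u ⁻¹' S) (deriv u) :=
  .of_radial hr₁ (fun r hr => (hu r hr).2)
    (continuousOn_deriv_deriv_of_radial (fun _ hr => (hr₁.trans_le hr.1).ne') hf
      (fun r hr => (hu r hr).1.continuousAt.continuousWithinAt)
      (fun r hr => (hu r hr).2.continuousAt.continuousWithinAt) heq)
    fun r ⟨hr, hrS⟩ => hasDerivAt_deriv_deriv_of_radial (hr₁.trans hr.1).ne'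
      (hu r (Ioo_subset_Icc_self hr)).1 (hu r (Ioo_subset_Icc_self hr)).2 (hf' _ hrS)
      (eventually_of_mem (Icc_mem_nhds hr.1 hr.2) heq)

end Radial

theorem injOn_of_deriv_ne_zero {u : ℝ → ℝ} {s : Set ℝ} (hs : s.OrdConnected)
    (hu : ContinuousOn u s) (hu' : ∀ x ∈ interior s, deriv u x ≠ 0) : InjOn u s := by
  have hne : ∀ x ∈ s, ∀ y ∈ s, x < y → u x ≠ u y := fun x hx y hy hxy hux => by
    obtain ⟨t, ht, hut⟩ := exists_deriv_eq_zero hxy (hu.mono (hs.out hx hy)) hux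
    exact hu' t (interior_mono (hs.out hx hy) (by rwa [interior_Icc])) hut
  intro x hx y hy hux
  by_contra hxy
  rcases lt_or_gt_of_ne hxy with h | h
  · exact hne x hx y hy h hux
  · exact hne y hy x hx h hux.symm

theorem differentiableAt_of_odd {f : ℝ → ℝ} (hodd : f.Odd)
    (hpos : ∀ s, 0 < s → DifferentiableAt ℝ f s) {s : ℝ} (hs : s ≠ 0) :
    DifferentiableAt ℝ f s := by
  rcases hs.lt_or_gt with h | h
  · have hneg : DifferentiableAt ℝ (fun t => -f (-t)) s :=
      ((hpos (-s) (neg_pos.2 h)).comp s differentiableAt_id.neg).neg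
    simpa [hodd _] using hneg
  · exact hpos s h

theorem phi_zero_between_extremals_general {a : ℝ} (ha : 0 < a) {f u φ : ℝ → ℝ}
    {S : Set ℝ} (hS : S.Countable) (hf : Continuous f) (hf' : ∀ s ∉ S, DifferentiableAt ℝ f s)
    {r₁ r₂ : ℝ} (hr₁ : 0 < r₁) (hr₁₂ : r₁ < r₂)
    (hud : ∀ r ∈ Icc r₁ r₂, DifferentiableAt ℝ u r ∧ DifferentiableAt ℝ (deriv u) r)
    (hueq : ∀ r ∈ Icc r₁ r₂, deriv (deriv u) r + a / r * deriv u r + f (u r) = 0)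
    (hφd : ∀ r ∈ Icc r₁ r₂, DifferentiableAt ℝ φ r)
    (hφc : ContinuousOn (deriv φ) (Icc r₁ r₂))
    (hφd2 : ∀ r ∈ Ioo r₁ r₂, u r ∉ S → DifferentiableAt ℝ (deriv φ) r)
    (hφeq : ∀ r ∈ Ioo r₁ r₂, u r ∉ S →
      deriv (deriv φ) r + a / r * deriv φ r + deriv f (u r) * φ r = 0)
    (hz₁ : deriv u r₁ = 0) (hz₂ : deriv u r₂ = 0) (hcons : ∀ r ∈ Ioo r₁ r₂, deriv u r ≠ 0) :
    ∃ t ∈ Ioo r₁ r₂, φ t = 0 := by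
  have hpos : ∀ r ∈ Icc r₁ r₂, 0 < r := fun r hr => hr₁.trans_le hr.1
  have hinj : InjOn u (Ioo r₁ r₂) := injOn_of_deriv_ne_zero ordConnected_Ioo
    (fun r hr => (hud r (Ioo_subset_Icc_self hr)).1.continuousAt.continuousWithinAt)
    (by rwa [interior_Ioo])
  have hcountable : (Ioo r₁ r₂ ∩ u ⁻¹' S).Countable :=
    MapsTo.countable_of_injOn (f := u) (fun _ hr => hr.2) (hinj.mono inter_subset_left) hS
  have hv := SturmLiouvilleSolOn.deriv_of_radial hr₁ hf hf' hud hueq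
  have hφ : SturmLiouvilleSolOn (fun r => r ^ a) (fun r => r ^ a * deriv f (u r)) r₁ r₂
      (u ⁻¹' S) φ :=
    .of_radial hr₁ hφd hφc fun r ⟨hr, hrS⟩ =>
      (hφd2 r hr hrS).hasDerivAt.congr_deriv (by linarith [hφeq r hr hrS])
  refine hv.exists_eq_zero_of_potential_lt hr₁₂ hcountable (Real.rpow_nonneg hr₁.le a)
    (Real.rpow_nonneg (hr₁.trans hr₁₂).le a) hφ ?_ (fun r hr => ?_) hz₁ hz₂ hcons
  · have hdiff : ContinuousOn (fun r : ℝ => r ^ a * (a / r ^ 2)) (Icc r₁ r₂) :=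
      (continuousOn_id.rpow_const fun r hr => Or.inl (hpos r hr).ne').mul
        (continuousOn_const.div (continuousOn_id.pow 2) fun r hr => (pow_pos (hpos r hr) 2).ne')
    exact hdiff.congr fun r _ => by ring
  · have hr₀ := hpos r (Ioo_subset_Icc_self hr)
    exact mul_lt_mul_of_pos_left (sub_lt_self _ (by positivity)) (Real.rpow_pos_of_pos hr₀ a)

/-- **Proposition 3.1 (i).** Between two consecutive zeros of `u'` there is at least one
zero of `φ`, where `φ` solves the linearized equation. -/
theorem phi_zero_between_extremals
    (n : ℕ) (hn : 2 ≤ n)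
    (f : ℝ → ℝ) (b β : ℝ) (hf : Continuous f)
    (h1 : Hf1 f b β) (h2 : Hf2 f)
    (u : ℝ → ℝ)
    (hud : ∀ r : ℝ, 0 < r → DifferentiableAt ℝ u r ∧ DifferentiableAt ℝ (deriv u) r)
    (hueq : ∀ r : ℝ, 0 < r →
      deriv (deriv u) r + ((n : ℝ) - 1) / r * deriv u r + f (u r) = 0)
    (φ : ℝ → ℝ)
    (hφd : ∀ r : ℝ, 0 < r → DifferentiableAt ℝ φ r)
    (hφc : ContinuousOn (deriv φ) (Ioi 0))
    (hφd2 : ∀ r : ℝ, 0 < r → u r ≠ 0 → DifferentiableAt ℝ (deriv φ) r)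
    (hφne : ∃ r : ℝ, 0 < r ∧ φ r ≠ 0)
    (hφeq : ∀ r : ℝ, 0 < r → u r ≠ 0 →
      deriv (deriv φ) r + ((n : ℝ) - 1) / r * deriv φ r + deriv f (u r) * φ r = 0)
    (r₁ r₂ : ℝ) (hr₁ : 0 < r₁) (hr₁₂ : r₁ < r₂)
    (hz₁ : deriv u r₁ = 0) (hz₂ : deriv u r₂ = 0)
    (hcons : ∀ r ∈ Ioo r₁ r₂, deriv u r ≠ 0) :
    ∃ t ∈ Ioo r₁ r₂, φ t = 0 := by
  have hpos : Icc r₁ r₂ ⊆ Ioi 0 := fun r hr => hr₁.trans_le hr.1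
  have hpos' : Ioo r₁ r₂ ⊆ Ioi 0 := Ioo_subset_Icc_self.trans hpos
  exact phi_zero_between_extremals_general (sub_pos.2 (by exact_mod_cast hn))
    (countable_singleton 0) hf (fun _ hs => differentiableAt_of_odd h1.1 h2.2.1 hs) hr₁ hr₁₂
    (fun r hr => hud r (hpos hr)) (fun r hr => hueq r (hpos hr)) (fun r hr => hφd r (hpos hr))
    (hφc.mono hpos) (fun r hr => hφd2 r (hpos' hr)) (fun r hr => hφeq r (hpos' hr))
    hz₁ hz₂ hcons
end

section
/- Assume f satisfies (f1), (f2), and (f3): f(s) ≥ f'(s)(s−β) for all s ≥ β. Let α > β, let u = u(·,α), and let R > 0 be the first point with u(R) = β (so u > β on [0,R)). Let φ be a C¹ function on [0,∞) with φ(0) = 1, φ'(0) = 0, satisfying the linearized equation φ''(r) + ((n−1)/r)φ'(r) + f'(u(r))φ(r) = 0 for r ∈ (0,R). Then φ(r) > 0 for all r ∈ (0,R). -/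
open Set Filter MeasureTheory

open Paper Set Filter MeasureTheory

/-!
The function `v = u - β` is positive and `Δv + f'(u) v = f'(u) (u - β) - f(u) ≤ 0` by (f3), so it
is a supersolution of the linearized equation. As long as `φ ≥ 0`, the weighted Wronskian
`W = r ^ (n - 1) (φ' v - φ v')` is therefore nondecreasing, while `(φ / v)' = W / (r ^ (n - 1) v²)`.
Since `n ≥ 2`, the weight `r ^ (n - 1)` is at most linear at `0`, so a negative value of `W` would
make `φ / v` blow up at least logarithmically at `0`. Hence `W ≥ 0` and `φ / v` is nondecreasing,
which prevents `φ` from reaching a first zero.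
-/

open scoped Topology

/-- The radial part of the Laplacian in `ν` dimensions. The dimension `ν` may be any real number;
the value at `0` has no meaning. -/
noncomputable def radialLaplacian (ν : ℝ) (w : ℝ → ℝ) (r : ℝ) : ℝ :=
  deriv (deriv w) r + (ν - 1) / r * deriv w r

/-- The Wronskian of `φ` and `v` weighted by `r ^ (ν - 1)`, which makes it a first integral when
`φ` and `v` solve the same linear radial equation. -/
noncomputable def radialWronskian (ν : ℝ) (φ v : ℝ → ℝ) (r : ℝ) : ℝ :=
  r ^ (ν - 1) * (deriv φ r * v r - φ r * deriv v r)

theorem exists_first_le_of_lowerSemicontinuousOn {X Y : Type*} [LinearOrder X]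
    [TopologicalSpace X] [ClosedIicTopology X] [CompactIccSpace X] [LinearOrder Y]
    {g : X → Y} {a b : X} {c : Y} (hab : a ≤ b) (hg : LowerSemicontinuousOn g (Icc a b))
    (ha : c < g a) (hb : g b ≤ c) :
    ∃ z ∈ Ioc a b, g z ≤ c ∧ ∀ x ∈ Ico a z, c < g x := by
  obtain ⟨z, ⟨hz, hgz⟩, hmin⟩ :=
    (hg.isCompact_inter_preimage_Iic isCompact_Icc c).exists_isLeast ⟨b, ⟨hab, le_rfl⟩, hb⟩
  have hne : a ≠ z := fun h => ha.not_ge (h ▸ hgz)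
  refine ⟨z, ⟨hz.1.lt_of_ne hne, hz.2⟩, hgz, fun x hx => ?_⟩
  by_contra! hle
  exact (hmin ⟨⟨hx.1, hx.2.le.trans hz.2⟩, hle⟩).not_gt hx.2

theorem tendsto_atTop_of_hasDerivAt_le_neg_div {q q' : ℝ → ℝ} {a C : ℝ} (ha : 0 < a) (hC : 0 < C)
    (hq : ∀ r ∈ Ioo 0 a, HasDerivAt q (q' r) r) (hq' : ∀ r ∈ Ioo 0 a, q' r ≤ -(C / r)) :
    Tendsto q (𝓝[>] 0) atTop := by
  have hderiv : ∀ r ∈ Ioo 0 a,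
      HasDerivAt (fun r => q r + C * Real.log r) (q' r + C * r⁻¹) r := fun r hr =>
    (hq r hr).add ((Real.hasDerivAt_log hr.1.ne').const_mul C)
  have hanti : AntitoneOn (fun r => q r + C * Real.log r) (Ioo 0 a) := by
    refine antitoneOn_of_hasDerivWithinAt_nonpos (convex_Ioo 0 a)
      (fun r hr => (hderiv r hr).continuousAt.continuousWithinAt)
      (fun r hr => (hderiv r (interior_subset hr)).hasDerivWithinAt) fun r hr => ?_
    have hqr := hq' r (interior_subset hr)
    rw [div_eq_mul_inv] at hqr
    linarith
  obtain ⟨c, hc⟩ := exists_between ha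
  have hlog : Tendsto (fun r => q c + C * Real.log c - C * Real.log r) (𝓝[>] 0) atTop := by
    simp only [sub_eq_add_neg]
    exact tendsto_atTop_add_const_left _ _
      (tendsto_neg_atBot_atTop.comp (Real.tendsto_log_nhdsGT_zero.const_mul_atBot hC))
  refine tendsto_atTop_mono' _ ?_ hlog
  filter_upwards [Ioo_mem_nhdsGT hc.1] with r hr
  exact sub_le_iff_le_add.2 (hanti ⟨hr.1, hr.2.trans hc.2⟩ hc hr.2.le)

theorem nonneg_of_monotoneOn_of_hasDerivAt_div {q W p : ℝ → ℝ} {z K l : ℝ}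
    (hW : MonotoneOn W (Ioo 0 z)) (hq : Tendsto q (𝓝[>] 0) (𝓝 l))
    (hderiv : ∀ r ∈ Ioo 0 z, HasDerivAt q (W r / p r) r)
    (hp : ∀ r ∈ Ioo 0 z, 0 < p r ∧ p r ≤ K * r) :
    ∀ r ∈ Ioo 0 z, 0 ≤ W r := by
  intro c hc
  by_contra! hneg
  have hK : 0 < K := pos_of_mul_pos_left ((hp c hc).1.trans_le (hp c hc).2) hc.1.le
  have hsub : Ioo 0 c ⊆ Ioo 0 z := Ioo_subset_Ioo_right hc.2.le
  have hle : ∀ r ∈ Ioo 0 c, W r / p r ≤ -(-W c / K / r) := by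
    intro r hr
    obtain ⟨hp0, hpK⟩ := hp r (hsub hr)
    calc W r / p r ≤ W c / p r := by gcongr; exact hW (hsub hr) hc hr.2.le
      _ = -(-W c / p r) := by rw [neg_div, neg_neg]
      _ ≤ -(-W c / (K * r)) := neg_le_neg (div_le_div_of_nonneg_left (neg_pos.2 hneg).le hp0 hpK)
      _ = -(-W c / K / r) := by rw [div_div]
  exact not_tendsto_nhds_of_tendsto_atTop
    (tendsto_atTop_of_hasDerivAt_le_neg_div hc.1 (div_pos (neg_pos.2 hneg) hK)
      (fun r hr => hderiv r (hsub hr)) hle) l hq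

theorem radialLaplacian_sub_const (ν : ℝ) (w : ℝ → ℝ) (c : ℝ) :
    radialLaplacian ν (fun r => w r - c) = radialLaplacian ν w := by
  funext r
  simp only [radialLaplacian, deriv_sub_const_fun]

section

variable {ν r : ℝ} {φ v : ℝ → ℝ}

theorem hasDerivAt_radialWronskian (hr : r ≠ 0)
    (hφ : DifferentiableAt ℝ φ r) (hφ' : DifferentiableAt ℝ (deriv φ) r)
    (hv : DifferentiableAt ℝ v r) (hv' : DifferentiableAt ℝ (deriv v) r) :
    HasDerivAt (radialWronskian ν φ v)
      (r ^ (ν - 1) * (radialLaplacian ν φ r * v r - φ r * radialLaplacian ν v r)) r := by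
  refine ((Real.hasDerivAt_rpow_const (Or.inl hr)).fun_mul
    ((hφ'.hasDerivAt.fun_mul hv.hasDerivAt).fun_sub
      (hφ.hasDerivAt.fun_mul hv'.hasDerivAt))).congr_deriv ?_
  rw [Real.rpow_sub_one hr (ν - 1)]
  simp only [radialLaplacian]
  ring

theorem hasDerivAt_div_of_radialWronskian (hr : 0 < r)
    (hφ : DifferentiableAt ℝ φ r) (hv : DifferentiableAt ℝ v r) (hvr : v r ≠ 0) :
    HasDerivAt (fun r => φ r / v r) (radialWronskian ν φ v r / (r ^ (ν - 1) * v r ^ 2)) r :=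
  (hφ.hasDerivAt.fun_div hv.hasDerivAt hvr).congr_deriv
    (mul_div_mul_left _ _ (Real.rpow_pos_of_pos hr _).ne').symm

end

theorem rpow_sub_one_le_rpow_sub_two_mul {p r s : ℝ} (hp : 2 ≤ p) (hr : 0 < r) (hrs : r ≤ s) :
    r ^ (p - 1) ≤ s ^ (p - 2) * r :=
  calc r ^ (p - 1) = r ^ (p - 2) * r := by
        rw [← Real.rpow_add_one hr.ne']
        ring_nf
    _ ≤ s ^ (p - 2) * r :=
        mul_le_mul_of_nonneg_right (Real.rpow_le_rpow hr.le hrs (sub_nonneg.2 hp)) hr.le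

theorem exists_rpow_sub_one_mul_sq_le_mul {p z : ℝ} (hp : 2 ≤ p) {v : ℝ → ℝ}
    (hv : ContinuousOn v (Icc 0 z)) :
    ∃ K, ∀ r ∈ Ioo 0 z, r ^ (p - 1) * v r ^ 2 ≤ K * r := by
  obtain ⟨M, hM⟩ := isCompact_Icc.bddAbove_image (hv.pow 2)
  refine ⟨z ^ (p - 2) * M, fun r hr => ?_⟩
  have hz : 0 < z := hr.1.trans hr.2
  calc r ^ (p - 1) * v r ^ 2 ≤ z ^ (p - 2) * r * v r ^ 2 := by
        gcongr
        exact rpow_sub_one_le_rpow_sub_two_mul hp hr.1 hr.2.le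
    _ ≤ z ^ (p - 2) * r * M :=
        mul_le_mul_of_nonneg_left (hM (mem_image_of_mem _ (Ioo_subset_Icc_self hr)))
          (mul_nonneg (Real.rpow_nonneg hz.le _) hr.1.le)
    _ = z ^ (p - 2) * M * r := by ring

section Comparison

variable {ν z : ℝ} {a φ v : ℝ → ℝ}

theorem monotoneOn_radialWronskian
    (hφd : ∀ r ∈ Ioo 0 z, DifferentiableAt ℝ φ r ∧ DifferentiableAt ℝ (deriv φ) r)
    (hvd : ∀ r ∈ Ioo 0 z, DifferentiableAt ℝ v r ∧ DifferentiableAt ℝ (deriv v) r)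
    (hφ : ∀ r ∈ Ioo 0 z, 0 ≤ radialLaplacian ν φ r + a r * φ r)
    (hv : ∀ r ∈ Ioo 0 z, radialLaplacian ν v r + a r * v r ≤ 0)
    (hφ0 : ∀ r ∈ Ioo 0 z, 0 ≤ φ r) (hv0 : ∀ r ∈ Ioo 0 z, 0 ≤ v r) :
    MonotoneOn (radialWronskian ν φ v) (Ioo 0 z) := by
  have hderiv : ∀ r ∈ Ioo 0 z, HasDerivAt (radialWronskian ν φ v) _ r := fun r hr =>
    hasDerivAt_radialWronskian hr.1.ne' (hφd r hr).1 (hφd r hr).2 (hvd r hr).1 (hvd r hr).2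
  refine monotoneOn_of_hasDerivWithinAt_nonneg (convex_Ioo 0 z)
    (fun r hr => (hderiv r hr).continuousAt.continuousWithinAt)
    (fun r hr => (hderiv r (interior_subset hr)).hasDerivWithinAt) fun r hr => ?_
  replace hr := interior_subset hr
  refine mul_nonneg (Real.rpow_nonneg hr.1.le _) ?_
  linarith [mul_nonneg (hφ r hr) (hv0 r hr), mul_nonneg (hφ0 r hr) (neg_nonneg.2 (hv r hr))]

theorem monotoneOn_div_of_radial_subsolution_supersolution (hν : 2 ≤ ν)
    (hφc : ContinuousOn φ (Icc 0 z)) (hvc : ContinuousOn v (Icc 0 z))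
    (hφd : ∀ r ∈ Ioo 0 z, DifferentiableAt ℝ φ r ∧ DifferentiableAt ℝ (deriv φ) r)
    (hvd : ∀ r ∈ Ioo 0 z, DifferentiableAt ℝ v r ∧ DifferentiableAt ℝ (deriv v) r)
    (hφ : ∀ r ∈ Ioo 0 z, 0 ≤ radialLaplacian ν φ r + a r * φ r)
    (hv : ∀ r ∈ Ioo 0 z, radialLaplacian ν v r + a r * v r ≤ 0)
    (hφ0 : ∀ r ∈ Ioo 0 z, 0 ≤ φ r) (hv0 : ∀ r ∈ Icc 0 z, 0 < v r) :
    MonotoneOn (fun r => φ r / v r) (Icc 0 z) := by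
  obtain hz | hz := le_or_gt z 0
  · exact (subsingleton_Icc_of_ge hz).monotoneOn _
  have hv0' : ∀ r ∈ Ioo 0 z, 0 < v r := fun r hr => hv0 r (Ioo_subset_Icc_self hr)
  have hquot : ContinuousOn (fun r => φ r / v r) (Icc 0 z) :=
    hφc.div hvc fun r hr => (hv0 r hr).ne'
  have hquot' : ∀ r ∈ Ioo 0 z, HasDerivAt (fun r => φ r / v r)
      (radialWronskian ν φ v r / (r ^ (ν - 1) * v r ^ 2)) r := fun r hr =>
    hasDerivAt_div_of_radialWronskian hr.1 (hφd r hr).1 (hvd r hr).1 (hv0' r hr).ne'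
  have hlim : ContinuousWithinAt (fun r => φ r / v r) (Ioi 0) 0 :=
    (hquot 0 ⟨le_rfl, hz.le⟩).mono_of_mem_nhdsWithin (Icc_mem_nhdsGT hz)
  obtain ⟨K, hK⟩ := exists_rpow_sub_one_mul_sq_le_mul hν hvc
  have hweight : ∀ r ∈ Ioo 0 z, 0 < r ^ (ν - 1) * v r ^ 2 := fun r hr =>
    mul_pos (Real.rpow_pos_of_pos hr.1 _) (pow_pos (hv0' r hr) 2)
  have hW : ∀ r ∈ Ioo 0 z, 0 ≤ radialWronskian ν φ v r :=
    nonneg_of_monotoneOn_of_hasDerivAt_div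
      (monotoneOn_radialWronskian hφd hvd hφ hv hφ0 fun r hr => (hv0' r hr).le)
      hlim.tendsto hquot' fun r hr => ⟨hweight r hr, hK r hr⟩
  rw [← interior_Icc] at hquot' hW hweight
  exact monotoneOn_of_hasDerivWithinAt_nonneg (convex_Icc 0 z) hquot
    (fun r hr => (hquot' r hr).hasDerivWithinAt)
    fun r hr => div_nonneg (hW r hr) (hweight r hr).le

theorem pos_of_radial_subsolution_supersolution {R : ℝ} (hν : 2 ≤ ν)
    (hφc : ContinuousOn φ (Ico 0 R)) (hvc : ContinuousOn v (Ico 0 R))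
    (hφd : ∀ r ∈ Ioo 0 R, DifferentiableAt ℝ φ r ∧ DifferentiableAt ℝ (deriv φ) r)
    (hvd : ∀ r ∈ Ioo 0 R, DifferentiableAt ℝ v r ∧ DifferentiableAt ℝ (deriv v) r)
    (hφ : ∀ r ∈ Ioo 0 R, 0 ≤ radialLaplacian ν φ r + a r * φ r)
    (hv : ∀ r ∈ Ioo 0 R, radialLaplacian ν v r + a r * v r ≤ 0)
    (hφ0 : 0 < φ 0) (hv0 : ∀ r ∈ Ico 0 R, 0 < v r) :
    ∀ r ∈ Ico 0 R, 0 < φ r := by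
  intro r hr
  by_contra! hφr
  obtain ⟨z, hz, hφz, hpos⟩ := exists_first_le_of_lowerSemicontinuousOn hr.1
    (hφc.mono (Icc_subset_Ico_right hr.2)).lowerSemicontinuousOn hφ0 hφr
  have hzR : z < R := hz.2.trans_lt hr.2
  have hIcc : Icc 0 z ⊆ Ico 0 R := Icc_subset_Ico_right hzR
  have hIoo : Ioo 0 z ⊆ Ioo 0 R := Ioo_subset_Ioo_right hzR.le
  have h0 : (0 : ℝ) ∈ Icc 0 z := ⟨le_rfl, hz.1.le⟩
  have hz' : z ∈ Icc 0 z := ⟨hz.1.le, le_rfl⟩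
  have hmono : MonotoneOn (fun r => φ r / v r) (Icc 0 z) :=
    monotoneOn_div_of_radial_subsolution_supersolution hν (hφc.mono hIcc) (hvc.mono hIcc)
      (fun s hs => hφd s (hIoo hs)) (fun s hs => hvd s (hIoo hs))
      (fun s hs => hφ s (hIoo hs)) (fun s hs => hv s (hIoo hs))
      (fun s hs => (hpos s (Ioo_subset_Ico_self hs)).le) (fun s hs => hv0 s (hIcc hs))
  have hquot_pos : 0 < φ z / v z :=
    (div_pos hφ0 (hv0 0 (hIcc h0))).trans_le (hmono h0 hz' hz.1.le)
  exact hφz.not_gt ((div_pos_iff_of_pos_right (hv0 z (hIcc hz'))).1 hquot_pos)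

end Comparison

theorem phi_positive_before_beta_general {ν β R : ℝ} (hν : 2 ≤ ν) {f g u φ : ℝ → ℝ}
    (hfg : ∀ s, β < s → g s * (s - β) ≤ f s)
    (huc : ContinuousOn u (Ico 0 R))
    (hud : ∀ r ∈ Ioo 0 R, DifferentiableAt ℝ u r ∧ DifferentiableAt ℝ (deriv u) r)
    (hu : ∀ r ∈ Ioo 0 R, radialLaplacian ν u r + f (u r) ≤ 0)
    (hβu : ∀ r ∈ Ico 0 R, β < u r)
    (hφc : ContinuousOn φ (Ico 0 R))
    (hφd : ∀ r ∈ Ioo 0 R, DifferentiableAt ℝ φ r ∧ DifferentiableAt ℝ (deriv φ) r)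
    (hφ : ∀ r ∈ Ioo 0 R, 0 ≤ radialLaplacian ν φ r + g (u r) * φ r)
    (hφ0 : 0 < φ 0) :
    ∀ r ∈ Ico 0 R, 0 < φ r := by
  refine pos_of_radial_subsolution_supersolution (v := fun r => u r - β) hν hφc
    (huc.sub continuousOn_const) hφd (fun r hr => ⟨(hud r hr).1.sub_const β, ?_⟩) hφ
    (fun r hr => ?_) hφ0 fun r hr => sub_pos.2 (hβu r hr)
  · rw [deriv_sub_const_fun]
    exact (hud r hr).2
  · rw [radialLaplacian_sub_const]
    linarith [hu r hr, hfg (u r) (hβu r (Ioo_subset_Ico_self hr))]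

/-- **Proposition 3.2.** Under (f1)–(f3), `φ` is strictly positive on `(0, r(β,α))`. -/
theorem phi_positive_before_beta
    (n : ℕ) (hn : 2 ≤ n)
    (f : ℝ → ℝ) (b β : ℝ) (hf : Continuous f)
    (h1 : Hf1 f b β) (h2 : Hf2 f) (h3 : Hf3 f β)
    (α : ℝ) (hα : β < α)
    (u : ℝ → ℝ) (hu : IVPsol n f α u)
    (R : ℝ) (hR : 0 < R) (huR : u R = β) (hfirst : ∀ r ∈ Ico (0:ℝ) R, β < u r)
    (φ : ℝ → ℝ)
    (hφc : ContinuousOn φ (Ici 0))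
    (hφd : ∀ r : ℝ, 0 < r → DifferentiableAt ℝ φ r ∧ DifferentiableAt ℝ (deriv φ) r)
    (hφ0 : φ 0 = 1) (hφ'0 : deriv φ 0 = 0)
    (hφeq : ∀ r ∈ Ioo (0:ℝ) R,
      deriv (deriv φ) r + ((n : ℝ) - 1) / r * deriv φ r + deriv f (u r) * φ r = 0) :
    ∀ r ∈ Ioo (0:ℝ) R, 0 < φ r := by
  obtain ⟨-, -, huc, hud, hueq⟩ := hu
  exact fun r hr => phi_positive_before_beta_general (g := deriv f) (Nat.ofNat_le_cast.2 hn)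
    (fun s hs => h3 s hs.le) (huc.mono Ico_subset_Ici_self) (fun r hr => hud r hr.1)
    (fun r hr => (hueq r hr.1).le) hfirst (hφc.mono Ico_subset_Ici_self)
    (fun r hr => hφd r hr.1) (fun r hr => (hφeq r hr).ge) (hφ0 ▸ one_pos)
    r (Ioo_subset_Ico_self hr)
end
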